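/- For every individual x, F (U {x}) x: x is the fusion of all of its components. -/

import Mathlib

/-- Components of `zz`: all objects that are one of some plurality fusing to a member of `zz`. -/
def Ucomp {α : Type*} (F : Set α → α → Prop) (zz : Set α) : Set α :=
  {u | ∃ z ∈ zz, ∃ yy, F yy z ∧ u ∈ yy}

/-- Parthood defined from fusion: `x` is part of `y` iff `y` fuses some plurality containing `x`. -/
def PartF {α : Type*} (F : Set α → α → Prop) (x y : α) : Prop :=
  ∃ zz, F zz y ∧ x ∈ zz

/-- Overlap defined from the fusion-induced parthood. -/
def OvF {α : Type*} (F : Set α → α → Prop) (x y : α) : Prop :=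
  ∃ z, PartF F z x ∧ PartF F z y

/-!
Let `s` be a fusion of the components of `x`. Then `x` is part of `s`, so if `x ≠ s`, weak
supplementation yields a part `z` of `s` that does not overlap `x`. But a part of a fusion overlaps
one of the things fused, so `z` overlaps a part of `x`, hence `x` itself: a contradiction.
-/

section Fusion

variable {α : Type*} {F : Set α → α → Prop} {u x y z : α} {zz : Set α}

theorem mem_ucomp : u ∈ Ucomp F zz ↔ ∃ z ∈ zz, PartF F u z :=
  Iff.rfl

theorem mem_ucomp_singleton : u ∈ Ucomp F {x} ↔ PartF F u x := by
  simp only [mem_ucomp, Set.mem_singleton_iff, exists_eq_left]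

theorem fusion_singleton_self (exF : ∀ zz : Set α, zz.Nonempty → ∃ y, F zz y)
    (idF : ∀ x y : α, F {y} x → x = y) (x : α) : F {x} x := by
  obtain ⟨y, hy⟩ := exF {x} (Set.singleton_nonempty x)
  rwa [idF y x hy] at hy

theorem PartF.refl (hx : F {x} x) : PartF F x x :=
  ⟨{x}, hx, Set.mem_singleton x⟩

theorem OvF.exists_fusion_inter (exF : ∀ zz : Set α, zz.Nonempty → ∃ y, F zz y)
    (hxy : OvF F x y) : ∃ u, F (Ucomp F {x} ∩ Ucomp F {y}) u := by
  obtain ⟨z, hzx, hzy⟩ := hxy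
  exact exF _ ⟨z, mem_ucomp_singleton.2 hzx, mem_ucomp_singleton.2 hzy⟩

section Extensional

variable (extF : ∀ (zz yy uu : Set α) (x v : α),
  F zz x → F yy x → F (uu ∪ zz) v → F (uu ∪ yy) v)

include extF

theorem PartF.fusion_singleton_union (hxy : PartF F x y) (hzz : F zz y) : F ({x} ∪ zz) y := by
  obtain ⟨yy, hyy, hx⟩ := hxy
  have hxyy : F ({x} ∪ yy) y := by
    rwa [Set.union_eq_self_of_subset_left (Set.singleton_subset_iff.2 hx)]
  exact extF yy zz {x} y y hyy hzz hxyy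

theorem PartF.trans (hy : F {y} y) (hxy : PartF F x y) (hyz : PartF F y z) : PartF F x z := by
  obtain ⟨yy, hyy, hx⟩ := hxy
  obtain ⟨zz, hzz, hyzz⟩ := hyz
  have hunion : F (zz ∪ {y}) z := by
    rwa [Set.union_eq_self_of_subset_right (Set.singleton_subset_iff.2 hyzz)]
  exact ⟨zz ∪ yy, extF {y} yy zz y z hy hyy hunion, Or.inr hx⟩

theorem OvF.mono_left (hx : F {x} x) (hxy : PartF F x y) (hxz : OvF F x z) : OvF F y z := by
  obtain ⟨w, hwx, hwz⟩ := hxz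
  exact ⟨w, hwx.trans extF hx hxy, hwz⟩

theorem PartF.exists_mem_ovF
    (compF : ∀ (zz : Set α) (x y : α), F (zz ∪ {x}) y → F zz y →
      ∃ vv, vv ⊆ Ucomp F zz ∧ F vv x ∧ vv.Nonempty)
    (hxy : PartF F x y) (hzz : F zz y) : ∃ z ∈ zz, OvF F z x := by
  have hunion : F (zz ∪ {x}) y := Set.union_comm {x} zz ▸ hxy.fusion_singleton_union extF hzz
  obtain ⟨vv, hvv, hvx, v, hv⟩ := compF zz x y hunion hzz
  obtain ⟨z, hz, hvz⟩ := mem_ucomp.1 (hvv hv)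
  exact ⟨z, hz, v, hvz, vv, hvx, hv⟩

theorem PartF.exists_partF_not_ovF (exF : ∀ zz : Set α, zz.Nonempty → ∃ y, F zz y)
    (wspF : ∀ x y : α, F ({x} ∪ {y}) y → x ≠ y →
      ∃ z ∈ Ucomp F {y}, ¬ ∃ u, F (Ucomp F {x} ∩ Ucomp F {z}) u)
    (hy : F {y} y) (hxy : PartF F x y) (hne : x ≠ y) : ∃ z, PartF F z y ∧ ¬ OvF F x z := by
  obtain ⟨z, hzy, hdisj⟩ := wspF x y (hxy.fusion_singleton_union extF hy) hne
  exact ⟨z, mem_ucomp_singleton.1 hzy, fun hxz ↦ hdisj (hxz.exists_fusion_inter exF)⟩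

end Extensional

end Fusion

theorem fusion_of_components {α : Type*} (F : Set α → α → Prop)
    (exF : ∀ zz : Set α, zz.Nonempty → ∃ y, F zz y)
    (extF : ∀ (zz yy uu : Set α) (x v : α),
      F zz x → F yy x → F (uu ∪ zz) v → F (uu ∪ yy) v)
    (idF : ∀ x y : α, F {y} x → x = y)
    (compF : ∀ (zz : Set α) (x y : α), F (zz ∪ {x}) y → F zz y →
      ∃ vv, vv ⊆ Ucomp F zz ∧ F vv x ∧ vv.Nonempty)
    (wspF : ∀ x y : α, F ({x} ∪ {y}) y → x ≠ y →
      ∃ z ∈ Ucomp F {y}, ¬ ∃ u, F (Ucomp F {x} ∩ Ucomp F {z}) u) :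
    ∀ x : α, F (Ucomp F {x}) x := by
  intro x
  have selfF : ∀ y, F {y} y := fusion_singleton_self exF idF
  have hx : x ∈ Ucomp F {x} := mem_ucomp_singleton.2 (.refl (selfF x))
  obtain ⟨s, hs⟩ := exF (Ucomp F {x}) ⟨x, hx⟩
  have hxs : PartF F x s := ⟨Ucomp F {x}, hs, hx⟩
  suffices hxs_eq : x = s by rwa [← hxs_eq] at hs
  by_contra hne
  obtain ⟨z, hzs, hdisj⟩ := hxs.exists_partF_not_ovF extF exF wspF (selfF s) hne
  obtain ⟨w, hwx, hwz⟩ := hzs.exists_mem_ovF extF compF hs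
  exact hdisj (hwz.mono_left extF (selfF w) (mem_ucomp_singleton.1 hwx))
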